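/- arXiv:1205.3454 — 2 statements merged into one kernel-verified Lean document; each statement's English description precedes it below -/
import Mathlib

section
/- Let S be an idempotent covered semigroup and let (s,t,α), (u,v,β) ∈ T(S). Then (s,t,α) 𝓛 (u,v,β) in T(S) if and only if α = β and t 𝓛 v in S. -/
namespace SemibandEmbed

/-- The two-element right-zero semigroup `R₂ = {σ, τ}`. -/
inductive R2 : Type where
  | σ : R2
  | τ : R2
  deriving DecidableEq

section GreenDefs

variable {S : Type*} [Semigroup S]

/-- Green's relation 𝓡 : `a 𝓡 b` iff `a S¹ = b S¹` (inside `S¹ = WithOne S`). -/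
def greenR (a b : S) : Prop :=
  {x : WithOne S | ∃ u : WithOne S, x = (a : WithOne S) * u} =
    {x : WithOne S | ∃ u : WithOne S, x = (b : WithOne S) * u}

/-- Green's relation 𝓛 : `a 𝓛 b` iff `S¹ a = S¹ b`. -/
def greenL (a b : S) : Prop :=
  {x : WithOne S | ∃ u : WithOne S, x = u * (a : WithOne S)} =
    {x : WithOne S | ∃ u : WithOne S, x = u * (b : WithOne S)}

/-- Green's relation 𝓗 = 𝓛 ∩ 𝓡. -/
def greenH (a b : S) : Prop := greenL a b ∧ greenR a b

/-- Green's relation 𝓓 : `a 𝓓 b` iff `a 𝓡 c` and `c 𝓛 b` for some `c`. -/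
def greenD (a b : S) : Prop := ∃ c : S, greenR a c ∧ greenL c b

/-- Green's relation 𝓙 : `a 𝓙 b` iff `S¹ a S¹ = S¹ b S¹`. -/
def greenJ (a b : S) : Prop :=
  {x : WithOne S | ∃ u v : WithOne S, x = u * (a : WithOne S) * v} =
    {x : WithOne S | ∃ u v : WithOne S, x = u * (b : WithOne S) * v}

/-- Mitsch's natural partial order on a semigroup. -/
def natLe (a b : S) : Prop := ∃ x y : S, a = x * b ∧ a = b * y ∧ a = a * y

end GreenDefs

/-- A semigroup is idempotent covered if every element `s` satisfies `s e = s = f s`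
for some idempotents `e`, `f`. -/
def IdemCovered (S : Type*) [Semigroup S] : Prop :=
  ∀ s : S, ∃ e f : S, IsIdempotentElem e ∧ IsIdempotentElem f ∧ s * e = s ∧ f * s = s

/-- A semigroup is regular if every `a` satisfies `a x a = a` for some `x`. -/
def IsRegularSemigroup (S : Type*) [Semigroup S] : Prop :=
  ∀ a : S, ∃ x : S, a * x * a = a

/-- A semigroup is periodic if every element generates a finite monogenic subsemigroup,
i.e. `aᵐ = aⁿ` for some `0 < m < n` (powers computed in `S¹ = WithOne S`). -/
def IsPeriodic (S : Type*) [Semigroup S] : Prop :=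
  ∀ a : S, ∃ m n : ℕ, 0 < m ∧ m < n ∧ (a : WithOne S) ^ m = (a : WithOne S) ^ n

/-- `𝓗` is a left congruence. -/
def IsLeftCongH (S : Type*) [Semigroup S] : Prop :=
  ∀ a b c : S, greenH a b → greenH (c * a) (c * b)

/-- `𝓗` is a right congruence. -/
def IsRightCongH (S : Type*) [Semigroup S] : Prop :=
  ∀ a b c : S, greenH a b → greenH (a * c) (b * c)

/-- A semigroup is completely regular if every element is 𝓗-related to an idempotent. -/
def IsCompletelyRegular (S : Type*) [Semigroup S] : Prop :=
  ∀ a : S, ∃ e : S, IsIdempotentElem e ∧ greenH a e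

section SemidirectProduct

variable {S : Type*} [Semigroup S]

/-- The multiplication of the semidirect product `(S × S) * R₂`:
`(t₁,s₁,σ)·(t₂,s₂,α) = (t₁s₂, s₁s₂, α)` and `(t₁,s₁,τ)·(t₂,s₂,α) = (t₁t₂, s₁t₂, α)`. -/
def sdMul (x y : S × S × R2) : S × S × R2 :=
  match x, y with
  | (t₁, s₁, R2.σ), (_, s₂, α) => (t₁ * s₂, s₁ * s₂, α)
  | (t₁, s₁, R2.τ), (t₂, _, α) => (t₁ * t₂, s₁ * t₂, α)

instance : Mul (S × S × R2) := ⟨sdMul⟩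

theorem sdMul_def (x y : S × S × R2) : x * y = sdMul x y := rfl

instance : Semigroup (S × S × R2) where
  mul_assoc x y z := by
    obtain ⟨t₁, s₁, α₁⟩ := x
    obtain ⟨t₂, s₂, α₂⟩ := y
    obtain ⟨t₃, s₃, α₃⟩ := z
    cases α₁ <;> cases α₂ <;> simp [sdMul_def, sdMul, mul_assoc]

/-- The set `E = {(s,t,α) ∈ E(T*R₂) : s ∈ S¹ t}`. -/
def Eset (S : Type*) [Semigroup S] : Set (S × S × R2) :=
  {x | IsIdempotentElem x ∧ ∃ a : WithOne S, (x.1 : WithOne S) = a * (x.2.1 : WithOne S)}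

/-- `T(S)`: the subsemigroup of the semidirect product generated by `E`. -/
def TS (S : Type*) [Semigroup S] : Subsemigroup (S × S × R2) :=
  Subsemigroup.closure (Eset S)

/-- Green's `𝓛` is a right congruence. -/
theorem greenL_mul_right {S : Type*} [Semigroup S] {a b : S} (hab : greenL a b) (c : S) :
    greenL (a * c) (b * c) := by
  have key : ∀ {a b : S}, greenL a b → ∀ x : WithOne S,
      (∃ u : WithOne S, x = u * ((a * c : S) : WithOne S)) →
      (∃ u : WithOne S, x = u * ((b * c : S) : WithOne S)) := by
    intro a b hab x hx
    obtain ⟨u, rfl⟩ := hx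
    have h1 : (u * (a : WithOne S)) ∈
        {x : WithOne S | ∃ u : WithOne S, x = u * (a : WithOne S)} := ⟨u, rfl⟩
    rw [greenL] at hab
    rw [hab] at h1
    obtain ⟨w, hw⟩ := h1
    refine ⟨w, ?_⟩
    rw [WithOne.coe_mul, WithOne.coe_mul, ← mul_assoc, hw, mul_assoc]
  have hab' : greenL b a := hab.symm
  ext x
  exact ⟨key hab x, key hab' x⟩

/-- `R(S) = {(s,t,α) ∈ T(S) : s 𝓛 t}`, a subsemigroup of `T(S)`. -/
def RS (S : Type*) [Semigroup S] : Subsemigroup ↥(TS S) where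
  carrier := {x | greenL (x : S × S × R2).1 (x : S × S × R2).2.1}
  mul_mem' := by
    rintro ⟨⟨s, t, α⟩, hx⟩ ⟨⟨u, v, β⟩, hy⟩ hxs hys
    simp only [Set.mem_setOf_eq] at hxs hys ⊢
    cases α <;> exact greenL_mul_right hxs _

end SemidirectProduct

/-!
Write `a ≤𝓛 b` for `a ∈ S¹ b`. It suffices to show that `(s, t, α) ≤𝓛 (u, v, β)` in `T(S)` iff
`α = β` and `t ≤𝓛 v`. Left multiplication in `T*R₂` never changes the last coordinate, and it
multiplies the middle coordinate `v` into either `b v` or `b u`; as `u ≤𝓛 v` throughout `T(S)`,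
this gives one direction.

For the other, if `(s, t, α) ∈ T(S)` then `f t = t` for some idempotent `f`: this is inherited
by products, and in `E` either `t` is itself idempotent or `t s = t` with `s ≤𝓛 t`, in which case
`s = t` or `s = d t` and `f = t d`. Hence `s ≤𝓛 t` is witnessed by some `p` with `s = p t` and
`p f = p`. Taking an idempotent `g` with `g v = v`, write likewise `t = c v` with `c g = c`. Then
`(s, t, α) = (p, f, σ) (f, f, τ) (c, g, σ) (u, v, α)`, and the first three factors lie in `E`.
-/

section LeftOrder

variable {S : Type*} [Semigroup S]

/-- Green's preorder `≤𝓛` of a semigroup: `a ≤𝓛 b` iff `a ∈ S¹ b`, with `S¹` encoded as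
`WithOne S` as in `greenL`, the equivalence relation it induces. -/
def greenLLe (a b : S) : Prop :=
  ∃ w : WithOne S, (a : WithOne S) = w * (b : WithOne S)

local infix:50 "≤𝓛" => greenLLe

theorem greenLLe_iff_eq_or_exists_mul {a b : S} : a ≤𝓛 b ↔ a = b ∨ ∃ c, a = c * b := by
  simp only [greenLLe, WithOne.exists, one_mul, ← WithOne.coe_mul, WithOne.coe_inj]

theorem greenLLe.refl (a : S) : a ≤𝓛 a :=
  ⟨1, (one_mul _).symm⟩

theorem greenLLe.trans {a b c : S} (hab : a ≤𝓛 b) (hbc : b ≤𝓛 c) : a ≤𝓛 c := by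
  obtain ⟨w, hw⟩ := hab
  obtain ⟨z, hz⟩ := hbc
  exact ⟨w * z, by rw [hw, hz, mul_assoc]⟩

theorem greenLLe.mul_right {a b : S} (hab : a ≤𝓛 b) (c : S) : a * c ≤𝓛 b * c := by
  obtain ⟨w, hw⟩ := hab
  exact ⟨w, by rw [WithOne.coe_mul, WithOne.coe_mul, hw, mul_assoc]⟩

theorem mul_greenLLe (a b : S) : a * b ≤𝓛 b :=
  ⟨a, WithOne.coe_mul a b⟩

theorem greenL_iff_greenLLe_and_greenLLe {a b : S} : greenL a b ↔ a ≤𝓛 b ∧ b ≤𝓛 a := by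
  simp only [greenL, Set.ext_iff, Set.mem_ofPred_eq]
  constructor
  · intro h
    exact ⟨(h a).1 (greenLLe.refl a), (h b).2 (greenLLe.refl b)⟩
  · rintro ⟨⟨w, hw⟩, ⟨z, hz⟩⟩ x
    constructor
    · rintro ⟨y, rfl⟩
      exact ⟨y * w, by rw [hw, mul_assoc]⟩
    · rintro ⟨y, rfl⟩
      exact ⟨y * z, by rw [hz, mul_assoc]⟩

theorem greenLLe.exists_mul_eq {a b f : S} (hab : a ≤𝓛 b) (hf : IsIdempotentElem f)
    (hfb : f * b = b) : ∃ p, p * f = p ∧ p * b = a := by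
  obtain rfl | ⟨d, rfl⟩ := greenLLe_iff_eq_or_exists_mul.1 hab
  · exact ⟨f, hf, hfb⟩
  · exact ⟨d * f, by rw [mul_assoc, hf.eq], by rw [mul_assoc, hfb]⟩

theorem greenLLe.exists_idempotent_mul_eq {a b : S} (hab : a ≤𝓛 b) (hba : b * a = b) :
    ∃ f, IsIdempotentElem f ∧ f * b = b := by
  obtain rfl | ⟨d, rfl⟩ := greenLLe_iff_eq_or_exists_mul.1 hab
  · exact ⟨a, hba, hba⟩
  · have hbdb : b * d * b = b := by rw [mul_assoc, hba]
    exact ⟨b * d, by rw [IsIdempotentElem, ← mul_assoc, hbdb], hbdb⟩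

theorem mk_σ_mul (s t u v : S) (α : R2) :
    ((s, t, R2.σ) : S × S × R2) * (u, v, α) = (s * v, t * v, α) :=
  rfl

theorem mk_τ_mul (s t u v : S) (α : R2) :
    ((s, t, R2.τ) : S × S × R2) * (u, v, α) = (s * u, t * u, α) :=
  rfl

theorem mk_σ_mem_TS {p f : S} (hf : IsIdempotentElem f) (hpf : p * f = p) :
    ((p, f, R2.σ) : S × S × R2) ∈ TS S := by
  refine Subsemigroup.subset_closure ⟨?_, p, ?_⟩
  · rw [IsIdempotentElem, mk_σ_mul, hpf, hf.eq]
  · rw [← WithOne.coe_mul, hpf]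

theorem mk_τ_mem_TS {f : S} (hf : IsIdempotentElem f) :
    ((f, f, R2.τ) : S × S × R2) ∈ TS S := by
  refine Subsemigroup.subset_closure ⟨?_, greenLLe.refl f⟩
  rw [IsIdempotentElem, mk_τ_mul, hf.eq]

theorem fst_greenLLe_of_mem_TS {x : S × S × R2} (hx : x ∈ TS S) : x.1 ≤𝓛 x.2.1 := by
  induction hx using Subsemigroup.closure_induction with
  | mem x hxE => exact hxE.2
  | mul x y _ _ hx _ =>
    obtain ⟨s, t, _ | _⟩ := x
    · exact hx.mul_right y.2.1
    · exact hx.mul_right y.1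

theorem exists_idempotent_mul_eq_of_mem_Eset {x : S × S × R2} (hx : x ∈ Eset S) :
    ∃ f, IsIdempotentElem f ∧ f * x.2.1 = x.2.1 := by
  obtain ⟨hidem, hle⟩ := hx
  obtain ⟨s, t, _ | _⟩ := x
  · have ht : IsIdempotentElem t := congrArg (fun y : S × S × R2 => y.2.1) hidem
    exact ⟨t, ht, ht⟩
  · have hts : t * s = t := congrArg (fun y : S × S × R2 => y.2.1) hidem
    exact greenLLe.exists_idempotent_mul_eq hle hts

theorem exists_idempotent_mul_eq_of_mem_TS {x : S × S × R2} (hx : x ∈ TS S) :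
    ∃ f, IsIdempotentElem f ∧ f * x.2.1 = x.2.1 := by
  induction hx using Subsemigroup.closure_induction with
  | mem x hxE => exact exists_idempotent_mul_eq_of_mem_Eset hxE
  | mul x y _ _ hx _ =>
    obtain ⟨f, hf, hfx⟩ := hx
    refine ⟨f, hf, ?_⟩
    obtain ⟨s, t, _ | _⟩ := x
    · change f * (t * y.2.1) = t * y.2.1
      rw [← mul_assoc, hfx]
    · change f * (t * y.1) = t * y.1
      rw [← mul_assoc, hfx]

theorem mul_snd_snd (x y : S × S × R2) : (x * y).2.2 = y.2.2 := by
  obtain ⟨s, t, _ | _⟩ := x <;> rfl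

theorem mul_snd_fst_greenLLe (x : S × S × R2) {y : S × S × R2} (hy : y.1 ≤𝓛 y.2.1) :
    (x * y).2.1 ≤𝓛 y.2.1 := by
  obtain ⟨s, t, _ | _⟩ := x
  · exact mul_greenLLe t y.2.1
  · exact (mul_greenLLe t y.1).trans hy

theorem exists_mem_TS_mul_eq {s t u v : S} {α : R2}
    (hx : ((s, t, α) : S × S × R2) ∈ TS S) (hy : ((u, v, α) : S × S × R2) ∈ TS S)
    (htv : t ≤𝓛 v) : ∃ z ∈ TS S, z * (u, v, α) = (s, t, α) := by
  obtain ⟨f, hf, hft⟩ := exists_idempotent_mul_eq_of_mem_TS hx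
  obtain ⟨g, hg, hgv⟩ := exists_idempotent_mul_eq_of_mem_TS hy
  obtain ⟨p, hpf, hpt⟩ := (fst_greenLLe_of_mem_TS hx).exists_mul_eq hf hft
  obtain ⟨c, hcg, hcv⟩ := htv.exists_mul_eq hg hgv
  refine ⟨(p, f, R2.σ) * ((f, f, R2.τ) * (c, g, R2.σ)),
    mul_mem (mk_σ_mem_TS hf hpf) (mul_mem (mk_τ_mem_TS hf) (mk_σ_mem_TS hg hcg)), ?_⟩
  calc (p, f, R2.σ) * ((f, f, R2.τ) * (c, g, R2.σ)) * (u, v, α)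
      = (p, f, R2.σ) * ((f, f, R2.τ) * ((c, g, R2.σ) * (u, v, α))) := by simp only [mul_assoc]
    _ = (p, f, R2.σ) * ((f, f, R2.τ) * (t, v, α)) := by rw [mk_σ_mul c, hcv, hgv]
    _ = (p, f, R2.σ) * (t, t, α) := by rw [mk_τ_mul, hft]
    _ = (s, t, α) := by rw [mk_σ_mul, hpt, hft]

theorem greenLLe_TS_iff {s t u v : S} {α β : R2}
    (hx : ((s, t, α) : S × S × R2) ∈ TS S) (hy : ((u, v, β) : S × S × R2) ∈ TS S) :
    (⟨(s, t, α), hx⟩ : ↥(TS S)) ≤𝓛 ⟨(u, v, β), hy⟩ ↔ α = β ∧ t ≤𝓛 v := by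
  constructor
  · intro h
    obtain heq | ⟨z, hz⟩ := greenLLe_iff_eq_or_exists_mul.1 h
    · cases heq
      exact ⟨rfl, greenLLe.refl t⟩
    · have hz' : (s, t, α) = z.1 * (u, v, β) := congrArg Subtype.val hz
      have hlast := mul_snd_snd z.1 (u, v, β)
      have hmid := mul_snd_fst_greenLLe z.1 (fst_greenLLe_of_mem_TS hy)
      rw [← hz'] at hlast hmid
      exact ⟨hlast, hmid⟩
  · rintro ⟨rfl, htv⟩
    obtain ⟨z, hz, hzy⟩ := exists_mem_TS_mul_eq hx hy htv
    exact greenLLe_iff_eq_or_exists_mul.2 (Or.inr ⟨⟨z, hz⟩, Subtype.ext hzy.symm⟩)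

end LeftOrder

theorem statement_8_general {S : Type*} [Semigroup S] (s t u v : S) (α β : R2)
    (hx : ((s, t, α) : S × S × R2) ∈ TS S) (hy : ((u, v, β) : S × S × R2) ∈ TS S) :
    greenL (⟨(s, t, α), hx⟩ : ↥(TS S)) ⟨(u, v, β), hy⟩ ↔ α = β ∧ greenL t v := by
  rw [greenL_iff_greenLLe_and_greenLLe, greenL_iff_greenLLe_and_greenLLe,
    greenLLe_TS_iff hx hy, greenLLe_TS_iff hy hx]
  constructor
  · rintro ⟨⟨hαβ, htv⟩, -, hvt⟩
    exact ⟨hαβ, htv, hvt⟩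
  · rintro ⟨hαβ, htv, hvt⟩
    exact ⟨⟨hαβ, htv⟩, hαβ.symm, hvt⟩

/-- description of Green's relation 𝓛 on `T(S)`. -/
theorem statement_8 {S : Type*} [Semigroup S] (hS : IdemCovered S)
    (s t u v : S) (α β : R2)
    (hx : ((s, t, α) : S × S × R2) ∈ TS S) (hy : ((u, v, β) : S × S × R2) ∈ TS S) :
    greenL (⟨(s, t, α), hx⟩ : ↥(TS S)) ⟨(u, v, β), hy⟩ ↔ α = β ∧ greenL t v :=
  statement_8_general s t u v α β hx hy

end SemibandEmbed
end

section
/- Let S be an idempotent covered semigroup and let (s,t,α), (u,v,β) ∈ T(S). Then (s,t,α) ≤ (u,v,β) in the natural partial order of T(S) if and only if α = β, t ≤ v in the natural partial order of S, and there exists a ∈ S¹ with s = at and u = av. -/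
namespace SemibandEmbed

/-!
In any semigroup `S`, a triple `(s, t, α)` lies in `T(S)` exactly when `s ∈ S¹t` and `t` has
idempotent left and right identities `f` and `e`: if `s = zt` with `zf = z`, then
`(s, t, α) = (z, f, σ)(f, f, τ)(t, e, σ)(e, e, α)` is a product of members of `E`. The identities
exist for a generator `(at, t, τ)` because its idempotency says that `at` is idempotent and
`t = tat`, and in a product `t` inherits `f` from the first factor and `e` from the last.

A product in `T*R₂` multiplies the first two coordinates of its left factor on the right by one
common element, so `(s, t, α) ≤ (u, v, β)` restricts to `t ≤ v` and carries `u = av` to `s = at`.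
Conversely, if `t = xv = vy = ty`, then multiplying `x` and `y` on both sides by idempotent
identities of `t` and `v` gives witnesses that themselves have idempotent identities, and these
lift to `(ax, x, σ)` and `(y, y, α)` in `T(S)`.
-/

section LeftMultiples

variable {S : Type*} [Semigroup S]

/-- Green's preorder `s ≤_𝓛 t`, i.e. `s ∈ S¹t`, in the form in which it occurs in `Eset`. -/
def greenLeL (s t : S) : Prop := ∃ a : WithOne S, (s : WithOne S) = a * (t : WithOne S)

theorem greenLeL_refl (s : S) : greenLeL s s := ⟨1, (one_mul _).symm⟩

theorem greenLeL_mul_left (a t : S) : greenLeL (a * t) t := ⟨a, WithOne.coe_mul a t⟩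

theorem greenLeL_iff {s t : S} : greenLeL s t ↔ s = t ∨ ∃ a : S, s = a * t := by
  constructor
  · rintro ⟨a, hs⟩
    cases a with
    | one => exact Or.inl (WithOne.coe_inj.1 (hs.trans (one_mul _)))
    | coe a => exact Or.inr ⟨a, WithOne.coe_inj.1 hs⟩
  · rintro (rfl | ⟨a, rfl⟩)
    · exact greenLeL_refl s
    · exact greenLeL_mul_left a t

theorem exists_coe_eq_mul_coe (a : WithOne S) (t : S) :
    ∃ s : S, (s : WithOne S) = a * (t : WithOne S) := by
  cases a with
  | one => exact ⟨t, (one_mul _).symm⟩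
  | coe a => exact ⟨a * t, WithOne.coe_mul a t⟩

theorem coe_mul_eq_mul_coe_mul {a : WithOne S} {s t : S}
    (h : (s : WithOne S) = a * (t : WithOne S)) (c : S) :
    ((s * c : S) : WithOne S) = a * ((t * c : S) : WithOne S) := by
  rw [WithOne.coe_mul, WithOne.coe_mul, h, mul_assoc]

theorem eq_mul_of_coe_eq_mul {a : WithOne S} {s t u v c : S}
    (hs : (s : WithOne S) = a * (t : WithOne S)) (hu : (u : WithOne S) = a * (v : WithOne S))
    (ht : t = v * c) : s = u * c := by
  rw [← WithOne.coe_inj, hs, coe_mul_eq_mul_coe_mul hu, ht]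

theorem greenLeL.mul_right {s t : S} (h : greenLeL s t) (c : S) : greenLeL (s * c) (t * c) := by
  obtain ⟨a, ha⟩ := h
  exact ⟨a, coe_mul_eq_mul_coe_mul ha c⟩

theorem greenLeL.mul_right_eq_self {s t e : S} (h : greenLeL s t) (hte : t * e = t) :
    s * e = s := by
  obtain ⟨a, ha⟩ := h
  exact (eq_mul_of_coe_eq_mul ha ha hte.symm).symm

theorem greenLeL.exists_mul_eq_mul {s t : S} (h : greenLeL s t) (p : S) :
    ∃ w : S, p * s = w * t := by
  obtain rfl | ⟨a, rfl⟩ := greenLeL_iff.1 h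
  · exact ⟨p, rfl⟩
  · exact ⟨p * a, (mul_assoc p a t).symm⟩

end LeftMultiples

section IdempotentIdentities

variable {S : Type*} [Semigroup S]

/-- The condition that `IdemCovered S` imposes on every element `t`: it has an idempotent right
identity and an idempotent left identity. -/
def IsIdemCoveredElem (t : S) : Prop :=
  ∃ e f : S, IsIdempotentElem e ∧ IsIdempotentElem f ∧ t * e = t ∧ f * t = t

theorem isIdemCoveredElem_mul_mul {e f : S} (he : IsIdempotentElem e) (hf : IsIdempotentElem f)
    (x : S) : IsIdemCoveredElem (f * x * e) :=
  ⟨e, f, he, hf, by rw [mul_assoc, he.eq], by rw [← mul_assoc, ← mul_assoc, hf.eq]⟩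

theorem isIdemCoveredElem_of_isIdempotentElem {e : S} (he : IsIdempotentElem e) :
    IsIdemCoveredElem e :=
  ⟨e, e, he, he, he, he⟩

theorem natLe.exists_isIdemCoveredElem {t v : S} (h : natLe t v) (ht : IsIdemCoveredElem t)
    (hv : IsIdemCoveredElem v) :
    ∃ x y : S, IsIdemCoveredElem x ∧ IsIdemCoveredElem y ∧ t = x * v ∧ t = v * y ∧ t = t * y := by
  obtain ⟨x, y, hxv, hvy, hty⟩ := h
  obtain ⟨-, g, -, hg, -, hgt⟩ := ht
  obtain ⟨e, f, he, hf, hve, hfv⟩ := hv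
  have hte : t * e = t := by rw [hxv, mul_assoc, hve]
  refine ⟨g * x * f, e * y * e, isIdemCoveredElem_mul_mul hf hg x,
    isIdemCoveredElem_mul_mul he he y, ?_, ?_, ?_⟩
  · rw [mul_assoc, hfv, mul_assoc, ← hxv, hgt]
  · rw [← mul_assoc, ← mul_assoc, hve, ← hvy, hte]
  · rw [← mul_assoc, ← mul_assoc, hte, ← hty, hte]

end IdempotentIdentities

section Membership

/-- The element `c` such that `(s, t, α) * (u, v, β) = (s * c, t * c, β)`. -/
def multiplier {M : Type*} (α : R2) (u v : M) : M :=
  match α with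
  | R2.σ => v
  | R2.τ => u

theorem multiplier_self {M : Type*} (α : R2) (u : M) : multiplier α u u = u := by
  cases α <;> rfl

variable {S : Type*} [Semigroup S]

theorem mk_mul_mk (s t u v : S) (α β : R2) :
    ((s, t, α) : S × S × R2) * (u, v, β) = (s * multiplier α u v, t * multiplier α u v, β) := by
  cases α <;> rfl

theorem greenLeL.multiplier {u v : S} (h : greenLeL u v) (α : R2) :
    greenLeL (multiplier α u v) v := by
  cases α
  · exact greenLeL_refl v
  · exact h

theorem mk_self_mem_Eset {e : S} (he : IsIdempotentElem e) (α : R2) :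
    ((e, e, α) : S × S × R2) ∈ Eset S := by
  refine ⟨?_, greenLeL_refl e⟩
  rw [IsIdempotentElem, mk_mul_mk, multiplier_self, he.eq]

theorem mk_σ_mem_Eset {s e : S} (he : IsIdempotentElem e) (hse : s * e = s) :
    ((s, e, R2.σ) : S × S × R2) ∈ Eset S := by
  refine ⟨?_, s, by rw [← WithOne.coe_mul, hse]⟩
  simp only [IsIdempotentElem, mk_mul_mk, multiplier, hse, he.eq]

theorem isIdemCoveredElem_of_mem_Eset {x : S × S × R2} (hx : x ∈ Eset S) :
    IsIdemCoveredElem x.2.1 := by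
  obtain ⟨s, t, α⟩ := x
  obtain ⟨hidem, hst⟩ := hx
  change greenLeL s t at hst
  change IsIdemCoveredElem t
  simp only [IsIdempotentElem, mk_mul_mk, Prod.mk.injEq, and_true] at hidem
  obtain ⟨hs, ht⟩ := hidem
  cases α with
  | σ => exact isIdemCoveredElem_of_isIdempotentElem ht
  | τ =>
    change s * s = s at hs
    change t * s = t at ht
    obtain rfl | ⟨a, rfl⟩ := greenLeL_iff.1 hst
    · exact isIdemCoveredElem_of_isIdempotentElem hs
    · have hta : IsIdempotentElem (t * a) := by
        rw [IsIdempotentElem, ← mul_assoc, mul_assoc t a t, ht]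
      exact ⟨a * t, t * a, hs, hta, ht, by rw [mul_assoc, ht]⟩

theorem greenLeL_and_isIdemCoveredElem_of_mem_TS {x : S × S × R2} (hx : x ∈ TS S) :
    greenLeL x.1 x.2.1 ∧ IsIdemCoveredElem x.2.1 := by
  induction hx using Subsemigroup.closure_induction with
  | mem x hx => exact ⟨hx.2, isIdemCoveredElem_of_mem_Eset hx⟩
  | mul x y _ _ hx hy =>
    obtain ⟨s, t, α⟩ := x
    obtain ⟨u, v, β⟩ := y
    obtain ⟨hst, -, f, -, hf, -, hft⟩ := hx
    obtain ⟨huv, e, -, he, -, hve, -⟩ := hy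
    rw [mk_mul_mk]
    refine ⟨hst.mul_right _, e, f, he, hf, ?_, ?_⟩
    · rw [mul_assoc, (huv.multiplier α).mul_right_eq_self hve]
    · rw [← mul_assoc, hft]

theorem mem_TS_of_greenLeL {s t : S} (hst : greenLeL s t) (ht : IsIdemCoveredElem t) (α : R2) :
    ((s, t, α) : S × S × R2) ∈ TS S := by
  obtain ⟨a, ha⟩ := hst
  obtain ⟨e, f, he, hf, hte, hft⟩ := ht
  obtain ⟨z, hz⟩ := exists_coe_eq_mul_coe a f
  have hzf : z * f = z := greenLeL.mul_right_eq_self ⟨a, hz⟩ hf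
  have hs : s = z * t := eq_mul_of_coe_eq_mul ha hz hft.symm
  have hfactor : ((s, t, α) : S × S × R2) =
      (z, f, R2.σ) * (f, f, R2.τ) * (t, e, R2.σ) * (e, e, α) := by
    simp only [mk_mul_mk, multiplier, hzf, hf.eq, hft, mul_assoc, hte, hs]
  rw [hfactor]
  have hE {x : S × S × R2} (hx : x ∈ Eset S) : x ∈ TS S := Subsemigroup.subset_closure hx
  exact mul_mem (mul_mem (mul_mem (hE (mk_σ_mem_Eset hf hzf)) (hE (mk_self_mem_Eset hf _)))
    (hE (mk_σ_mem_Eset he hte))) (hE (mk_self_mem_Eset he α))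

theorem mem_TS_iff {s t : S} {α : R2} :
    ((s, t, α) : S × S × R2) ∈ TS S ↔ greenLeL s t ∧ IsIdemCoveredElem t :=
  ⟨greenLeL_and_isIdemCoveredElem_of_mem_TS, fun h => mem_TS_of_greenLeL h.1 h.2 α⟩

end Membership

section NaturalOrder

variable {S : Type*} [Semigroup S]

theorem natLe_subtype_iff {T : Subsemigroup S} {x y : S} (hx : x ∈ T) (hy : y ∈ T) :
    natLe (⟨x, hx⟩ : T) ⟨y, hy⟩ ↔ ∃ p ∈ T, ∃ q ∈ T, x = p * y ∧ x = y * q ∧ x = x * q := by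
  simp only [natLe, Subtype.exists, MulMemClass.mk_mul_mk, Subtype.mk.injEq, exists_prop]

end NaturalOrder

theorem statement_12_general {S : Type*} [Semigroup S] (s t u v : S) (α β : R2)
    (hx : ((s, t, α) : S × S × R2) ∈ TS S) (hy : ((u, v, β) : S × S × R2) ∈ TS S) :
    natLe (⟨(s, t, α), hx⟩ : ↥(TS S)) ⟨(u, v, β), hy⟩ ↔
      α = β ∧ natLe t v ∧ ∃ a : WithOne S, (s : WithOne S) = a * (t : WithOne S) ∧
        (u : WithOne S) = a * (v : WithOne S) := by
  obtain ⟨-, htc⟩ := mem_TS_iff.1 hx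
  obtain ⟨huv, hvc⟩ := mem_TS_iff.1 hy
  rw [natLe_subtype_iff]
  constructor
  · rintro ⟨⟨p₁, p₂, γ⟩, -, ⟨q₁, q₂, δ⟩, -, hpy, hyq, hxq⟩
    simp only [mk_mul_mk, Prod.mk.injEq] at hpy hyq hxq
    obtain ⟨-, htp, rfl⟩ := hpy
    obtain ⟨hsq, hvq, -⟩ := hyq
    obtain ⟨w, hw⟩ := (huv.multiplier γ).exists_mul_eq_mul p₂
    obtain ⟨a, hu⟩ := huv
    refine ⟨rfl, ⟨w, multiplier α q₁ q₂, htp.trans hw, hvq, hxq.2.1⟩, a, ?_, hu⟩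
    rw [hsq, hvq, coe_mul_eq_mul_coe_mul hu]
  · rintro ⟨rfl, htv, a, hs, hu⟩
    obtain ⟨x, y, hxc, hyc, hxv, hvy, hty⟩ := htv.exists_isIdemCoveredElem htc hvc
    obtain ⟨z, hz⟩ := exists_coe_eq_mul_coe a x
    refine ⟨(z, x, R2.σ), mem_TS_iff.2 ⟨⟨a, hz⟩, hxc⟩,
      (y, y, α), mem_TS_iff.2 ⟨greenLeL_refl y, hyc⟩, ?_, ?_, ?_⟩ <;>
      simp only [mk_mul_mk, multiplier_self, Prod.mk.injEq, and_true]
    · exact ⟨eq_mul_of_coe_eq_mul hs hz hxv, hxv⟩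
    · exact ⟨eq_mul_of_coe_eq_mul hs hu hvy, hvy⟩
    · exact ⟨eq_mul_of_coe_eq_mul hs hs hty, hty⟩

/-- description of the natural partial order on `T(S)`. -/
theorem statement_12 {S : Type*} [Semigroup S] (hS : IdemCovered S)
    (s t u v : S) (α β : R2)
    (hx : ((s, t, α) : S × S × R2) ∈ TS S) (hy : ((u, v, β) : S × S × R2) ∈ TS S) :
    natLe (⟨(s, t, α), hx⟩ : ↥(TS S)) ⟨(u, v, β), hy⟩ ↔
      α = β ∧ natLe t v ∧ ∃ a : WithOne S, (s : WithOne S) = a * (t : WithOne S) ∧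
        (u : WithOne S) = a * (v : WithOne S) := by
  exact statement_12_general s t u v α β hx hy

end SemibandEmbed
end
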